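/- In a commutative quasi-Banach algebra A, an element x is invertible if and only if h(x) ≠ 0 for every complex homomorphism h : A → ℂ; equivalently, λ ∈ σ(x) if and only if h(x) = λ for some complex homomorphism h. -/

import Mathlib

/-- A quasi-Banach algebra structure on a complete metric ring `A`: the quasi-norm `N`
is a `q`-norm (`0 < q ≤ 1`), is multiplicative up to the constant `C_P ≥ 1`,
`‖e‖ = 1`, and the metric is induced by `N (x - y) ^ q`. -/
class QuasiBanachAlgebra (A : Type*) [Ring A] [Algebra ℂ A] [MetricSpace A] [CompleteSpace A]
    (N : A → ℝ) (q Cp : ℝ) : Prop where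
  q_pos : 0 < q
  q_le_one : q ≤ 1
  one_le_Cp : 1 ≤ Cp
  nonneg : ∀ x, 0 ≤ N x
  eq_zero_iff : ∀ x, N x = 0 ↔ x = 0
  smul_eq : ∀ (c : ℂ) (x : A), N (c • x) = ‖c‖ * N x
  add_pow_le : ∀ x y, N (x + y) ^ q ≤ N x ^ q + N y ^ q
  mul_le : ∀ x y, N (x * y) ≤ Cp * N x * N y
  norm_one : N 1 = 1
  dist_eq : ∀ x y, dist x y = N (x - y) ^ q

open Filter Topology

namespace RingSeminorm

/-- If `p` is a submultiplicative seminorm on a commutative complex algebra such that `1 - y` is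
invertible whenever `p y < 1`, then every non-invertible element is killed by a character. -/
theorem exists_algHom_apply_eq_zero {R : Type*} [CommRing R] [Algebra ℂ R] (p : RingSeminorm R)
    (hsmul : ∀ (c : ℂ) (x : R), p (c • x) ≤ ‖c‖ * p x)
    (hunit : ∀ y, p y < 1 → IsUnit (1 - y)) {x : R} (hx : ¬ IsUnit x) :
    ∃ φ : R →ₐ[ℂ] ℂ, φ x = 0 := by
  let _ : SeminormedCommRing R := { p.toSeminormedRing with mul_comm := mul_comm }
  let _ : NormedAlgebra ℂ R := { ‹Algebra ℂ R› with norm_smul_le := hsmul }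
  have hcoe : ¬ IsUnit (x : UniformSpace.Completion R) := by
    rintro h
    obtain ⟨b, hb⟩ := h.exists_right_inv
    have hcont : Continuous fun z : UniformSpace.Completion R => ‖1 - (x : _) * z‖ := by fun_prop
    have hopen : IsOpen {z : UniformSpace.Completion R | ‖1 - (x : _) * z‖ < 1} :=
      isOpen_lt hcont continuous_const
    obtain ⟨y, hy⟩ := UniformSpace.Completion.denseRange_coe.exists_mem_open hopen
      ⟨b, by simp [hb]⟩
    have hlt : p (1 - x * y) < 1 := by
      have : ‖((1 - x * y : R) : UniformSpace.Completion R)‖ < 1 := by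
        rw [UniformSpace.Completion.coe_sub, UniformSpace.Completion.coe_mul,
          UniformSpace.Completion.coe_one]
        exact hy
      rwa [UniformSpace.Completion.norm_coe] at this
    have := hunit _ hlt
    rw [sub_sub_cancel] at this
    exact hx (isUnit_of_mul_isUnit_left this)
  obtain ⟨f, hf⟩ := WeakDual.CharacterSpace.exists_apply_eq_zero hcoe
  let ι : R →ₐ[ℂ] UniformSpace.Completion R :=
    { UniformSpace.Completion.coeRingHom with commutes' := fun _ => rfl }
  exact ⟨(WeakDual.CharacterSpace.toAlgHom f).comp ι, hf⟩

end RingSeminorm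

/-- The number `n + 1` is dominated by any geometric progression of ratio greater than one. -/
theorem exists_natCast_add_one_le_mul_pow {u : ℝ} (hu : 1 < u) :
    ∃ C : ℝ, 0 ≤ C ∧ ∀ n : ℕ, (n : ℝ) + 1 ≤ C * u ^ n := by
  have hd : 0 < u - 1 := sub_pos.2 hu
  refine ⟨1 + (u - 1)⁻¹, by positivity, fun n => ?_⟩
  have hb : 1 + (n : ℝ) * (u - 1) ≤ u ^ n := by
    simpa using one_add_mul_le_pow (a := u - 1) (by linarith) n
  calc (n : ℝ) + 1 ≤ (1 + (u - 1)⁻¹) * (1 + n * (u - 1)) := by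
        have h : (1 + (u - 1)⁻¹) * (1 + n * (u - 1))
            = n + 1 + (u - 1)⁻¹ + n * (u - 1) := by
          field_simp
          ring
        have : 0 ≤ (u - 1)⁻¹ := by positivity
        have : 0 ≤ (n : ℝ) * (u - 1) := by positivity
        linarith
    _ ≤ _ := by gcongr

/-- `PowerBounded N x t` says that the powers of `x` grow at most like those of `t > 0`. -/
def PowerBounded {A : Type*} [Monoid A] (N : A → ℝ) (x : A) (t : ℝ) : Prop :=
  0 < t ∧ ∃ C : ℝ, 0 ≤ C ∧ ∀ n : ℕ, N (x ^ n) ≤ C * t ^ n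

/-- The spectral radius of `x`: the infimum of the geometric growth rates of its powers. -/
noncomputable def powerRadius {A : Type*} [Monoid A] (N : A → ℝ) (x : A) : ℝ :=
  sInf {t | PowerBounded N x t}

section Monoid

variable {A : Type*} [Monoid A] {N : A → ℝ} {x : A} {t : ℝ}

theorem bddBelow_powerBounded : BddBelow {t | PowerBounded N x t} :=
  ⟨0, fun _ ht => ht.1.le⟩

theorem powerRadius_nonneg : 0 ≤ powerRadius N x :=
  Real.sInf_nonneg fun _ ht => ht.1.le

theorem PowerBounded.powerRadius_le (h : PowerBounded N x t) : powerRadius N x ≤ t :=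
  csInf_le bddBelow_powerBounded h

end Monoid

namespace QuasiBanachAlgebra

section Ring

variable {A : Type*} [Ring A] [Algebra ℂ A] [MetricSpace A] [CompleteSpace A]
  {N : A → ℝ} {q Cp : ℝ}

theorem map_zero (h : QuasiBanachAlgebra A N q Cp) : N 0 = 0 :=
  (h.eq_zero_iff 0).2 rfl

theorem map_pow_le (h : QuasiBanachAlgebra A N q Cp) (x : A) (n : ℕ) :
    N (x ^ n) ≤ (Cp * N x) ^ n := by
  have hC : 0 ≤ Cp := zero_le_one.trans h.one_le_Cp
  have hx := h.nonneg x
  induction n with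
  | zero => simp [h.norm_one]
  | succ n ih =>
    calc N (x ^ (n + 1)) ≤ Cp * N (x ^ n) * N x := by
          rw [pow_succ]
          exact h.mul_le _ _
      _ ≤ Cp * (Cp * N x) ^ n * N x := by gcongr
      _ = (Cp * N x) ^ (n + 1) := by ring

theorem sum_rpow_le (h : QuasiBanachAlgebra A N q Cp) {ι : Type*} (s : Finset ι) (f : ι → A) :
    N (∑ i ∈ s, f i) ^ q ≤ ∑ i ∈ s, N (f i) ^ q := by
  classical
  induction s using Finset.induction_on with
  | empty => simp [h.map_zero, Real.zero_rpow h.q_pos.ne']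
  | insert a s ha ih =>
    rw [Finset.sum_insert ha, Finset.sum_insert ha]
    exact (h.add_pow_le _ _).trans (by gcongr)

theorem exists_powerBounded (h : QuasiBanachAlgebra A N q Cp) (x : A) :
    {t | PowerBounded N x t}.Nonempty := by
  have hC : 0 ≤ Cp := zero_le_one.trans h.one_le_Cp
  have hx := h.nonneg x
  refine ⟨Cp * N x + 1, by positivity, 1, zero_le_one, fun n => ?_⟩
  rw [one_mul]
  refine (h.map_pow_le x n).trans ?_
  gcongr
  linarith

theorem exists_powerBounded_lt (h : QuasiBanachAlgebra A N q Cp) {x : A} {s : ℝ}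
    (hs : powerRadius N x < s) : ∃ t < s, PowerBounded N x t := by
  obtain ⟨t, ht, hlt⟩ := exists_lt_of_csInf_lt (h.exists_powerBounded x) hs
  exact ⟨t, hlt, ht⟩

theorem powerBounded_zero (h : QuasiBanachAlgebra A N q Cp) {t : ℝ} (ht : 0 < t) :
    PowerBounded N (0 : A) t := by
  refine ⟨ht, 1, zero_le_one, fun n => ?_⟩
  cases n with
  | zero => simp [h.norm_one]
  | succ n =>
    rw [zero_pow n.succ_ne_zero, h.map_zero]
    positivity

theorem powerRadius_zero (h : QuasiBanachAlgebra A N q Cp) : powerRadius N (0 : A) = 0 :=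
  le_antisymm (le_of_forall_pos_le_add fun ε hε => by
    simpa using (h.powerBounded_zero hε).powerRadius_le) powerRadius_nonneg

theorem powerBounded_smul (h : QuasiBanachAlgebra A N q Cp) {x : A} {t : ℝ} {c : ℂ} (hc : c ≠ 0)
    (ht : PowerBounded N x t) : PowerBounded N (c • x) (‖c‖ * t) := by
  obtain ⟨ht0, C, hC, hb⟩ := ht
  refine ⟨by positivity, C, hC, fun n => ?_⟩
  rw [smul_pow, h.smul_eq, norm_pow, mul_pow, mul_left_comm]
  gcongr
  exact hb n

theorem powerRadius_smul_le (h : QuasiBanachAlgebra A N q Cp) (c : ℂ) (x : A) :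
    powerRadius N (c • x) ≤ ‖c‖ * powerRadius N x := by
  rcases eq_or_ne c 0 with rfl | hc
  · simp [h.powerRadius_zero]
  · have hc' : 0 < ‖c‖ := norm_pos_iff.2 hc
    rw [← div_le_iff₀' hc']
    refine le_csInf (h.exists_powerBounded x) fun t ht => ?_
    rw [div_le_iff₀' hc']
    exact (h.powerBounded_smul hc ht).powerRadius_le

theorem powerRadius_neg (h : QuasiBanachAlgebra A N q Cp) (x : A) :
    powerRadius N (-x) = powerRadius N x := by
  have key : ∀ y : A, powerRadius N (-y) ≤ powerRadius N y := fun y => by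
    simpa using h.powerRadius_smul_le (-1) y
  exact le_antisymm (key x) (by simpa using key (-x))

theorem continuous_mul_left (h : QuasiBanachAlgebra A N q Cp) (a : A) :
    Continuous fun x : A => a * x := by
  have hC : 0 ≤ Cp := zero_le_one.trans h.one_le_Cp
  have ha := h.nonneg a
  refine (LipschitzWith.of_dist_le_mul (K := ((Cp * N a) ^ q).toNNReal) fun x y => ?_).continuous
  rw [Real.coe_toNNReal _ (by positivity), h.dist_eq, h.dist_eq, ← mul_sub,
    ← Real.mul_rpow (by positivity) (h.nonneg _)]
  exact Real.rpow_le_rpow (h.nonneg _) (h.mul_le _ _) h.q_pos.le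

end Ring

section CommRing

variable {A : Type*} [CommRing A] [Algebra ℂ A] [MetricSpace A] [CompleteSpace A]
  {N : A → ℝ} {q Cp : ℝ} {x y : A} {s t : ℝ}

/-- The Neumann series converges on elements of spectral radius less than one. -/
theorem isUnit_one_sub (h : QuasiBanachAlgebra A N q Cp) (hy : powerRadius N y < 1) :
    IsUnit (1 - y) := by
  obtain ⟨t, ht1, ht0, C, hC, hb⟩ := h.exists_powerBounded_lt hy
  have hq := h.q_pos
  have hbq : ∀ n, N (y ^ n) ^ q ≤ C ^ q * (t ^ q) ^ n := fun n => by
    rw [Real.rpow_pow_comm ht0.le, ← Real.mul_rpow hC (by positivity)]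
    exact Real.rpow_le_rpow (h.nonneg _) (hb n) hq.le
  have htq : t ^ q < 1 := Real.rpow_lt_one ht0.le ht1 hq
  obtain ⟨z, hz⟩ := cauchySeq_tendsto_of_complete
    (cauchySeq_of_le_geometric (f := fun n => ∑ i ∈ Finset.range n, y ^ i) (t ^ q) (C ^ q) htq
      fun n => by
        rw [dist_comm, h.dist_eq, Finset.sum_range_succ, add_sub_cancel_left]
        exact hbq n)
  have hpow : Tendsto (fun n => C ^ q * (t ^ q) ^ n) atTop (𝓝 0) := by
    simpa using (tendsto_pow_atTop_nhds_zero_of_lt_one (by positivity) htq).const_mul (C ^ q)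
  have hone : Tendsto (fun n => (1 - y) * ∑ i ∈ Finset.range n, y ^ i) atTop (𝓝 1) := by
    refine tendsto_iff_dist_tendsto_zero.2 (squeeze_zero (fun _ => dist_nonneg) (fun n => ?_) hpow)
    rw [mul_neg_geom_sum, dist_comm, h.dist_eq, sub_sub_cancel]
    exact hbq n
  have hright : (1 - y) * z = 1 :=
    tendsto_nhds_unique (((h.continuous_mul_left (1 - y)).tendsto z).comp hz) hone
  exact IsUnit.of_mul_eq_one z hright

theorem powerBounded_mul (h : QuasiBanachAlgebra A N q Cp) (hx : PowerBounded N x s)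
    (hy : PowerBounded N y t) : PowerBounded N (x * y) (s * t) := by
  obtain ⟨hs, C, hC, hCb⟩ := hx
  obtain ⟨ht, D, hD, hDb⟩ := hy
  have hCp : 0 ≤ Cp := zero_le_one.trans h.one_le_Cp
  refine ⟨mul_pos hs ht, Cp * C * D, by positivity, fun n => ?_⟩
  have := h.nonneg (y ^ n)
  calc N ((x * y) ^ n) ≤ Cp * N (x ^ n) * N (y ^ n) := by
        rw [mul_pow]
        exact h.mul_le _ _
    _ ≤ Cp * (C * s ^ n) * (D * t ^ n) := by
        gcongr
        exacts [hCb n, hDb n]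
    _ = Cp * C * D * (s * t) ^ n := by ring

theorem powerBounded_add (h : QuasiBanachAlgebra A N q Cp) (hx : PowerBounded N x s)
    (hy : PowerBounded N y t) {w : ℝ} (hw : s + t < w) : PowerBounded N (x + y) w := by
  obtain ⟨hs, C, hC, hCb⟩ := hx
  obtain ⟨ht, D, hD, hDb⟩ := hy
  have hCp : 0 ≤ Cp := zero_le_one.trans h.one_le_Cp
  have hst : 0 < s + t := add_pos hs ht
  have hw0 : 0 < w := hst.trans hw
  have hq := h.q_pos
  obtain ⟨E, hE, hEb⟩ := exists_natCast_add_one_le_mul_pow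
    (Real.one_lt_rpow ((one_lt_div hst).2 hw) hq)
  set K := Cp * C * D with hK
  have hK0 : 0 ≤ K := by positivity
  refine ⟨hw0, E ^ q⁻¹ * K, by positivity, fun n => ?_⟩
  have hterm : ∀ m ∈ Finset.range (n + 1),
      N (x ^ m * y ^ (n - m) * (n.choose m : A)) ≤ K * (s + t) ^ n := by
    intro m hm
    have hmul : x ^ m * y ^ (n - m) * (n.choose m : A)
        = (n.choose m : ℂ) • (x ^ m * y ^ (n - m)) := by
      rw [Algebra.smul_def, map_natCast, mul_comm]
    have hchoose : s ^ m * t ^ (n - m) * n.choose m ≤ (s + t) ^ n := by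
      rw [add_pow]
      exact Finset.single_le_sum (f := fun m => s ^ m * t ^ (n - m) * (n.choose m : ℝ))
        (fun i _ => by positivity) hm
    have := h.nonneg (y ^ (n - m))
    rw [hmul, h.smul_eq, Complex.norm_natCast]
    calc (n.choose m : ℝ) * N (x ^ m * y ^ (n - m))
        ≤ n.choose m * (Cp * N (x ^ m) * N (y ^ (n - m))) := by
          gcongr
          exact h.mul_le _ _
      _ ≤ n.choose m * (Cp * (C * s ^ m) * (D * t ^ (n - m))) := by
          gcongr
          exacts [hCb m, hDb _]
      _ = K * (s ^ m * t ^ (n - m) * n.choose m) := by rw [hK]; ring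
      _ ≤ K * (s + t) ^ n := by gcongr
  rw [← Real.rpow_le_rpow_iff (h.nonneg _) (by positivity) hq]
  calc N ((x + y) ^ n) ^ q
      ≤ ∑ m ∈ Finset.range (n + 1), N (x ^ m * y ^ (n - m) * (n.choose m : A)) ^ q := by
        rw [add_pow]
        exact h.sum_rpow_le _ _
    _ ≤ ∑ m ∈ Finset.range (n + 1), (K * (s + t) ^ n) ^ q :=
        Finset.sum_le_sum fun m hm => Real.rpow_le_rpow (h.nonneg _) (hterm m hm) hq.le
    _ = (n + 1) * (K * (s + t) ^ n) ^ q := by simp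
    _ ≤ E * ((w / (s + t)) ^ q) ^ n * (K * (s + t) ^ n) ^ q := by
        gcongr
        exact hEb n
    _ = (E ^ q⁻¹ * K * w ^ n) ^ q := by
        rw [Real.rpow_pow_comm (by positivity), mul_assoc, ← Real.mul_rpow (by positivity)
          (by positivity), mul_assoc (E ^ q⁻¹),
          Real.mul_rpow (x := E ^ q⁻¹) (by positivity) (by positivity),
          Real.rpow_inv_rpow hE hq.ne']
        congr 2
        rw [div_pow]
        field_simp

/-- The spectral radius on a commutative quasi-Banach algebra, as a submultiplicative seminorm. -/
noncomputable def powerRadiusSeminorm (h : QuasiBanachAlgebra A N q Cp) : RingSeminorm A where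
  toFun := powerRadius N
  map_zero' := h.powerRadius_zero
  neg' := h.powerRadius_neg
  add_le' x y := by
    refine le_of_forall_pos_lt_add fun ε hε => ?_
    obtain ⟨s, hs, hxs⟩ := h.exists_powerBounded_lt
      (lt_add_of_pos_right (powerRadius N x) (by positivity : 0 < ε / 3))
    obtain ⟨t, ht, hyt⟩ := h.exists_powerBounded_lt
      (lt_add_of_pos_right (powerRadius N y) (by positivity : 0 < ε / 3))
    have := (h.powerBounded_add hxs hyt (w := s + t + ε / 3)
      (by linarith)).powerRadius_le
    linarith
  mul_le' x y := by
    refine le_mul_of_forall_lt₀ fun a ha b hb => ?_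
    obtain ⟨s, hs, hxs⟩ := h.exists_powerBounded_lt ha
    obtain ⟨t, ht, hyt⟩ := h.exists_powerBounded_lt hb
    exact (h.powerBounded_mul hxs hyt).powerRadius_le.trans
      (mul_le_mul hs.le ht.le hyt.1.le (hxs.1.trans hs).le)

theorem not_isUnit_iff_exists (h : QuasiBanachAlgebra A N q Cp) (x : A) :
    ¬ IsUnit x ↔ ∃ φ : A →ₗ[ℂ] ℂ, (∀ a b, φ (a * b) = φ a * φ b) ∧ φ ≠ 0 ∧ φ x = 0 := by
  constructor
  · intro hx
    obtain ⟨φ, hφ⟩ := h.powerRadiusSeminorm.exists_algHom_apply_eq_zero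
      h.powerRadius_smul_le (fun y hy => h.isUnit_one_sub hy) hx
    refine ⟨φ.toLinearMap, map_mul φ, fun h0 => ?_, hφ⟩
    simpa using DFunLike.congr_fun h0 1
  · rintro ⟨φ, hmul, hne, hφ⟩ hx
    obtain ⟨b, hb⟩ := hx.exists_right_inv
    refine hne (LinearMap.ext fun a => ?_)
    rw [← one_mul a, ← hb, hmul, hmul, hφ]
    simp

end CommRing

end QuasiBanachAlgebra

/-- Gelfand theory in a commutative quasi-Banach algebra: `x` is invertible iff
`h(x) ≠ 0` for every complex homomorphism `h`; and `λ ∈ σ(x)` iff `h(x) = λ` for some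
complex homomorphism `h`. -/
theorem gelfand_invertibility (A : Type*) [CommRing A] [Algebra ℂ A] [MetricSpace A]
    [CompleteSpace A] (N : A → ℝ) (q Cp : ℝ) [QuasiBanachAlgebra A N q Cp]
    (x : A) :
    (IsUnit x ↔
        ∀ φ : A →ₗ[ℂ] ℂ, (∀ a b, φ (a * b) = φ a * φ b) → φ ≠ 0 → φ x ≠ 0) ∧
      ∀ lam : ℂ, (¬ IsUnit (algebraMap ℂ A lam - x) ↔
        ∃ φ : A →ₗ[ℂ] ℂ, (∀ a b, φ (a * b) = φ a * φ b) ∧ φ ≠ 0 ∧ φ x = lam) := by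
  have h : QuasiBanachAlgebra A N q Cp := inferInstance
  refine ⟨?_, fun lam => ?_⟩
  · rw [← not_iff_not, h.not_isUnit_iff_exists]
    push Not
    rfl
  · rw [h.not_isUnit_iff_exists]
    refine exists_congr fun φ => and_congr_right fun hmul => and_congr_right fun hne => ?_
    have hone : φ 1 = 1 := by
      by_contra h1
      have h0 : φ 1 = 0 := by
        have hsq := hmul 1 1
        rw [one_mul] at hsq
        by_contra h0
        exact h1 (mul_left_cancel₀ h0 (by rw [← hsq, mul_one]))
      exact hne (LinearMap.ext fun a => by rw [← one_mul a, hmul, h0]; simp)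
    rw [map_sub, Algebra.algebraMap_eq_smul_one, map_smul, hone, smul_eq_mul, mul_one,
      sub_eq_zero, eq_comm]
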